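/- arXiv:0802.4186 — 4 statements merged into one kernel-verified Lean document; each statement's English description precedes it below -/
import Mathlib

section
/- (Linear Cauchy–Davenport theorem) Let K ⊆ L be a commutative field extension of prime degree [L:K] = p, and assume the characteristic of K is different from p. Then for all positive integers r, s with r, s ≤ p, the minimum of dim_K⟨AB⟩, taken over all K-subspaces A, B of L with dim_K A = r and dim_K B = s, equals min{r + s − 1, p}. -/
/-!
The proof is a descent on `dim B` by the linear Dyson transform, which replaces `(A, B)` by
`(A + eB, B ∩ e⁻¹A)`: this preserves `dim A + dim B` and does not enlarge `⟨AB⟩`. For a nonzero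
`b ∈ B`, choose `e = a / b` with `a ∈ A`, so that `b` survives in the second space. When no such
transform shrinks `B`, all of `b⁻¹B` lies in the stabilizer `{x | xA ⊆ A}`, which is an
intermediate field because `A` is finite-dimensional. Either it is `K`, and `B` is a line, or
`⟨AB⟩` contains a multiple of a larger field. Geometric progressions attain the bound.
-/

namespace LinearCauchyDavenport

open Module

section Transform

variable {K L : Type*} [CommSemiring K] [CommSemiring L] [Algebra K L]

/-- The first component `A + eB` of the linear Dyson transform of `(A, B)`. -/
abbrev dysonSup (e : L) (A B : Submodule K L) : Submodule K L :=
  A ⊔ B.map (LinearMap.mulLeft K e)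

/-- The second component of the linear Dyson transform of `(A, B)`; it is `B ∩ e⁻¹A` when `e` is
invertible, and the preimage of `A` under multiplication by `e` avoids the inverse. -/
abbrev dysonInf (e : L) (A B : Submodule K L) : Submodule K L :=
  B ⊓ A.comap (LinearMap.mulLeft K e)

theorem dysonSup_mul_dysonInf_le (e : L) (A B : Submodule K L) :
    dysonSup e A B * dysonInf e A B ≤ A * B := by
  rw [Submodule.sup_mul]
  refine sup_le (mul_le_mul' le_rfl inf_le_left) (Submodule.mul_le.2 ?_)
  rintro _ ⟨b, hb, rfl⟩ c ⟨-, hc⟩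
  have hswap : LinearMap.mulLeft K e b * c = e * c * b := by
    simp only [LinearMap.mulLeft_apply]
    ring
  exact hswap ▸ Submodule.mul_mem_mul hc hb

end Transform

theorem finrank_map_mulLeft {K L : Type*} [CommRing K] [Ring L] [IsDomain L] [Algebra K L]
    {e : L} (he : e ≠ 0) (A : Submodule K L) :
    finrank K (A.map (LinearMap.mulLeft K e)) = finrank K A :=
  (Submodule.equivMapOfInjective _ (mul_right_injective₀ he) A).finrank_eq.symm

theorem finrank_dysonSup_add_finrank_dysonInf {K L : Type*} [Field K] [CommRing L] [IsDomain L]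
    [Algebra K L] {e : L} (he : e ≠ 0) (A B : Submodule K L) [FiniteDimensional K A]
    [FiniteDimensional K B] :
    finrank K (dysonSup e A B) + finrank K (dysonInf e A B) = finrank K A + finrank K B := by
  rw [← finrank_map_mulLeft he (dysonInf e A B), ← finrank_map_mulLeft he B,
    ← Submodule.map_inf_eq_map_inf_comap, inf_comm, Submodule.finrank_sup_add_finrank_inf_eq]

section Field

variable {K L : Type*} [Field K] [Field L] [Algebra K L]

/-- The linear stabilizer `{x | xA ⊆ A}` of a finite-dimensional subspace `A`, the analogue of the
stabilizer of a set under translation. Finite-dimensionality is what makes it a field. -/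
def stabilizer (A : Submodule K L) [FiniteDimensional K A] : IntermediateField K L where
  carrier := {x | ∀ a ∈ A, x * a ∈ A}
  mul_mem' hx hy a ha := mul_assoc _ _ a ▸ hx _ (hy a ha)
  add_mem' hx hy a ha := add_mul _ _ a ▸ A.add_mem (hx a ha) (hy a ha)
  algebraMap_mem' k a ha := Algebra.smul_def k a ▸ A.smul_mem k ha
  inv_mem' x hx a ha := by
    rcases eq_or_ne x 0 with rfl | hx0
    · simp
    have hmap : A.map (LinearMap.mulLeft K x) = A :=
      Submodule.eq_of_le_of_finrank_eq (Submodule.map_le_iff_le_comap.2 hx)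
        (finrank_map_mulLeft hx0 A)
    obtain ⟨c, hc, rfl⟩ := hmap.ge ha
    simpa [hx0] using hc

theorem mem_stabilizer {A : Submodule K L} [FiniteDimensional K A] {x : L} :
    x ∈ stabilizer A ↔ ∀ a ∈ A, x * a ∈ A :=
  Iff.rfl

instance finiteDimensional_mul (A B : Submodule K L) [FiniteDimensional K A]
    [FiniteDimensional K B] : FiniteDimensional K ↥(A * B) :=
  Module.Finite.iff_fg.2
    ((Module.Finite.iff_fg.1 ‹FiniteDimensional K A›).mul
      (Module.Finite.iff_fg.1 ‹FiniteDimensional K B›))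

theorem finrank_le_finrank_mul {A B : Submodule K L} [FiniteDimensional K A]
    [FiniteDimensional K B] (hB : B ≠ ⊥) : finrank K A ≤ finrank K ↥(A * B) := by
  obtain ⟨b, hb, hb0⟩ := B.exists_mem_ne_zero_of_ne_bot hB
  rw [← finrank_map_mulLeft hb0 A]
  apply Submodule.finrank_mono
  rintro _ ⟨a, ha, rfl⟩
  rw [LinearMap.mulLeft_apply, mul_comm b a]
  exact Submodule.mul_mem_mul ha hb

theorem finrank_le_one_of_div_mem_bot {B : Submodule K L} {b : L} (hb : b ≠ 0)
    (h : ∀ c ∈ B, c / b ∈ (⊥ : IntermediateField K L)) : finrank K B ≤ 1 := by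
  have hline : B ≤ K ∙ b := fun c hc ↦ by
    obtain ⟨k, hk⟩ := IntermediateField.mem_bot.1 (h c hc)
    exact Submodule.mem_span_singleton.2
      ⟨k, by rw [Algebra.smul_def, hk, div_mul_cancel₀ c hb]⟩
  exact (Submodule.finrank_mono hline).trans (finrank_span_singleton hb).le

/-- `V` contains a nonzero multiple `zH` of an intermediate field `H ≠ K`, the analogue of a
subset of a group containing a coset of a nontrivial subgroup. This is the obstruction to the
Cauchy–Davenport bound. -/
def ContainsFieldCoset (V : Submodule K L) : Prop :=
  ∃ H : IntermediateField K L, H ≠ ⊥ ∧ ∃ z : L, z ≠ 0 ∧ ∀ h ∈ H, z * h ∈ V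

theorem ContainsFieldCoset.mono {V W : Submodule K L} (hVW : V ≤ W)
    (hV : ContainsFieldCoset V) : ContainsFieldCoset W :=
  let ⟨H, hH, z, hz, hzV⟩ := hV
  ⟨H, hH, z, hz, fun h hh ↦ hVW (hzV h hh)⟩

theorem ContainsFieldCoset.eq_top [IsSimpleOrder (IntermediateField K L)] {V : Submodule K L}
    (hV : ContainsFieldCoset V) : V = ⊤ := by
  obtain ⟨H, hH, z, hz, hzV⟩ := hV
  obtain rfl : H = ⊤ := (eq_bot_or_eq_top H).resolve_left hH
  refine Submodule.eq_top_iff'.2 fun y ↦ ?_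
  simpa only [mul_div_cancel₀ y hz] using hzV (y / z) IntermediateField.mem_top

theorem finrank_add_le_or_containsFieldCoset_of_div_mem_stabilizer {A B : Submodule K L}
    [FiniteDimensional K A] [FiniteDimensional K B] (hA : A ≠ ⊥) {b : L} (hb : b ∈ B)
    (hb0 : b ≠ 0) (h : ∀ c ∈ B, c / b ∈ stabilizer A) :
    finrank K A + finrank K B ≤ finrank K ↥(A * B) + 1 ∨ ContainsFieldCoset (A * B) := by
  by_cases hbot : stabilizer A = ⊥
  · exact .inl (add_le_add (finrank_le_finrank_mul (Submodule.ne_bot_iff B |>.2 ⟨b, hb, hb0⟩))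
      (finrank_le_one_of_div_mem_bot hb0 (hbot ▸ h)))
  · obtain ⟨a, ha, ha0⟩ := A.exists_mem_ne_zero_of_ne_bot hA
    refine .inr ⟨stabilizer A, hbot, a * b, mul_ne_zero ha0 hb0, fun x hx ↦ ?_⟩
    have hmem : x * a * b ∈ A * B := Submodule.mul_mem_mul (mem_stabilizer.1 hx a ha) hb
    rwa [mul_comm (a * b) x, ← mul_assoc]

theorem finrank_add_le_or_containsFieldCoset {A B : Submodule K L} [FiniteDimensional K A]
    [FiniteDimensional K B] (hA : A ≠ ⊥) (hB : B ≠ ⊥) :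
    finrank K A + finrank K B ≤ finrank K ↥(A * B) + 1 ∨ ContainsFieldCoset (A * B) := by
  induction hn : finrank K B using Nat.strong_induction_on generalizing A B with
  | _ n ih =>
  subst hn
  obtain ⟨b, hb, hb0⟩ := B.exists_mem_ne_zero_of_ne_bot hB
  by_cases hstab : ∀ c ∈ B, c / b ∈ stabilizer A
  · exact finrank_add_le_or_containsFieldCoset_of_div_mem_stabilizer hA hb hb0 hstab
  obtain ⟨c, hc, a, ha, hca⟩ : ∃ c ∈ B, ∃ a ∈ A, c / b * a ∉ A := by
    simpa only [mem_stabilizer, not_forall, exists_prop] using hstab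
  have ha0 : a ≠ 0 := by
    rintro rfl
    exact hca (by simp)
  have hb_mem : b ∈ dysonInf (a / b) A B := ⟨hb, by simpa [hb0] using ha⟩
  have hlt : dysonInf (a / b) A B < B := by
    refine inf_lt_left.2 fun hle ↦ hca ?_
    have hac : a / b * c ∈ A := hle hc
    rwa [div_mul_comm]
  have hmul := dysonSup_mul_dysonInf_le (a / b) A B
  have hsum := finrank_dysonSup_add_finrank_dysonInf (div_ne_zero ha0 hb0) A B
  rcases ih _ (Submodule.finrank_lt_finrank_of_lt hlt)
    (ne_bot_of_le_ne_bot hA (le_sup_left : A ≤ dysonSup (a / b) A B))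
    (Submodule.ne_bot_iff _ |>.2 ⟨b, hb_mem, hb0⟩) rfl with hle | hcoset
  · exact .inl (hsum ▸ hle.trans (Nat.add_le_add_right (Submodule.finrank_mono hmul) 1))
  · exact .inr (hcoset.mono hmul)

theorem min_finrank_add_sub_one_le_finrank_mul [IsSimpleOrder (IntermediateField K L)]
    {A B : Submodule K L} [FiniteDimensional K A] [FiniteDimensional K B] (hA : A ≠ ⊥)
    (hB : B ≠ ⊥) :
    min (finrank K A + finrank K B - 1) (finrank K L) ≤ finrank K ↥(A * B) := by
  rcases finrank_add_le_or_containsFieldCoset hA hB with hle | hcoset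
  · exact min_le_of_left_le (Nat.sub_le_of_le_add hle)
  · rw [hcoset.eq_top, finrank_top]
    exact min_le_right _ _

theorem exists_natDegree_minpoly_eq_finrank [Finite (IntermediateField K L)] :
    ∃ x : L, (minpoly K x).natDegree = finrank K L := by
  have := Field.FiniteDimensional.of_finite_intermediateField K L
  obtain ⟨x, hx⟩ := Field.exists_primitive_element_of_finite_intermediateField K L ⊤
  exact ⟨x, (Field.primitive_element_iff_minpoly_natDegree_eq K x).1 hx⟩

end Field

section Powers

/-- The span of `1, x, …, x ^ (n - 1)`, the linear analogue of an arithmetic progression. -/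
def powerSpan (K : Type*) {L : Type*} [CommSemiring K] [Semiring L] [Algebra K L] (x : L)
    (n : ℕ) : Submodule K L :=
  Submodule.span K (Set.range fun i : Fin n ↦ x ^ (i : ℕ))

theorem powerSpan_mul_powerSpan_le {K L : Type*} [CommSemiring K] [Semiring L] [Algebra K L]
    (x : L) (m n : ℕ) : powerSpan K x m * powerSpan K x n ≤ powerSpan K x (m + n - 1) := by
  rw [powerSpan, powerSpan, Submodule.span_mul_span, Submodule.span_le]
  rintro _ ⟨_, ⟨i, rfl⟩, _, ⟨j, rfl⟩, rfl⟩
  exact Submodule.subset_span ⟨⟨i + j, by omega⟩, pow_add x i j⟩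

theorem finrank_powerSpan_le {K L : Type*} [Field K] [Ring L] [Algebra K L] (x : L) (n : ℕ) :
    finrank K (powerSpan K x n) ≤ n :=
  (finrank_range_le_card _).trans_eq (Fintype.card_fin n)

theorem finrank_powerSpan {K L : Type*} [Field K] [Ring L] [Algebra K L] {x : L} {n : ℕ}
    (hn : n ≤ (minpoly K x).natDegree) : finrank K (powerSpan K x n) = n := by
  have hli : LinearIndependent K fun i : Fin n ↦ x ^ (i : ℕ) :=
    (linearIndependent_pow x).comp (Fin.castLE hn) (Fin.castLE_injective hn)
  rw [powerSpan, finrank_span_eq_card hli, Fintype.card_fin]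

end Powers

end LinearCauchyDavenport

open Module LinearCauchyDavenport in
theorem stmt_10_general (K L : Type*) [Field K] [Field L] [Algebra K L]
    [IsSimpleOrder (IntermediateField K L)] (r s : ℕ) (hr : 0 < r) (hs : 0 < s)
    (hrL : r ≤ finrank K L) (hsL : s ≤ finrank K L) :
    IsLeast {n : ℕ | ∃ A B : Submodule K L,
        finrank K A = r ∧ finrank K B = s ∧ finrank K ↥(A * B) = n}
      (min (r + s - 1) (finrank K L)) := by
  have : FiniteDimensional K L := Module.finite_of_finrank_pos (hr.trans_le hrL)
  have : Finite (IntermediateField K L) := by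
    classical exact .of_equiv _ IsSimpleOrder.equivBool.symm
  have hlower (A B : Submodule K L) (hA : finrank K A = r) (hB : finrank K B = s) :
      min (r + s - 1) (finrank K L) ≤ finrank K ↥(A * B) := by
    subst hA hB
    exact min_finrank_add_sub_one_le_finrank_mul (Submodule.one_le_finrank_iff.1 hr)
      (Submodule.one_le_finrank_iff.1 hs)
  obtain ⟨x, hx⟩ := exists_natDegree_minpoly_eq_finrank (K := K) (L := L)
  have hr_eq : finrank K (powerSpan K x r) = r := finrank_powerSpan (hx ▸ hrL)
  have hs_eq : finrank K (powerSpan K x s) = s := finrank_powerSpan (hx ▸ hsL)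
  have hupper : finrank K ↥(powerSpan K x r * powerSpan K x s) ≤ min (r + s - 1) (finrank K L) :=
    le_min ((Submodule.finrank_mono (powerSpan_mul_powerSpan_le x r s)).trans
      (finrank_powerSpan_le x _)) (Submodule.finrank_le _)
  refine ⟨⟨_, _, hr_eq, hs_eq, hupper.antisymm (hlower _ _ hr_eq hs_eq)⟩, ?_⟩
  rintro _ ⟨A, B, hA, hB, rfl⟩
  exact hlower A B hA hB

/-- Example 5.2 (linear Cauchy–Davenport theorem): if `[L:K] = p` is prime and
`char K ≠ p`, then for all positive `r, s ≤ p`, the minimum of `dim_K ⟨AB⟩` over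
`K`-subspaces `A, B` of `L` with `dim_K A = r`, `dim_K B = s` equals
`min (r + s - 1) p`. -/
theorem stmt_10 (K L : Type*) [Field K] [Field L] [Algebra K L]
    (p : ℕ) (hp : p.Prime) (hdeg : Module.finrank K L = p) (hchar : ringChar K ≠ p)
    (r s : ℕ) (hr : 0 < r) (hs : 0 < s) (hrp : r ≤ p) (hsp : s ≤ p) :
    sInf {n : ℕ | ∃ A B : Submodule K L,
        Module.finrank K A = r ∧ Module.finrank K B = s ∧ Module.finrank K ↥(A * B) = n}
      = min (r + s - 1) p := by
  have := IntermediateField.isSimpleOrder_of_finrank_prime K L (hdeg ▸ hp)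
  exact hdeg ▸ (stmt_10_general K L r s hr hs (hdeg ▸ hrp) (hdeg ▸ hsp)).csInf_eq
end

section
/- Let K ⊆ L be a finite Galois extension with Galois group G of order n, and assume that every divisor d of n is the cardinality of some subgroup of G. Then for all positive integers r, s with r, s ≤ n, the minimum of dim_K⟨AB⟩, taken over all K-subspaces A, B of L with dim_K A = r and dim_K B = s, equals min over all divisors d of n of (⌈r/d⌉ + ⌈s/d⌉ − 1)·d. -/
/-!
The lower bound comes from a linear version of Kneser's theorem: if `H` is the field of all `x`
with `x A B ⊆ A B`, then `dim A + dim B ≤ dim AB + dim H`. Applying it to `HA` and `HB`, which have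
the same product as `A` and `B` and whose dimensions are multiples of `dim H`, gives the rounded
inequality. To prove the linear Kneser theorem, Dyson's e-transform produces, for every nonzero
`a ∈ A`, a space `V` with `aB ⊆ V ⊆ AB` that satisfies the inequality with its own stabilizer.
There are finitely many intermediate fields, so when `K` has more elements than that, the `a ∈ A`
leading to one and the same stabilizer `H` already span `A`, whence `H` stabilizes `AB`. A finite
`K` is first enlarged to `K'` by an extension of large prime degree, which leaves all dimensions
and the degree `[L : K]` unchanged, so that the number of intermediate fields stays bounded.

For the upper bound take `L = E(x)` with `[E : K] = d`, and choose `A` and `B` inside the `E`-spans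
of the first `⌈r/d⌉` and `⌈s/d⌉` powers of `x`.
-/

open Module Submodule
open scoped Pointwise IntermediateField

namespace LinearKneser

section VectorSpace

variable {K M : Type*} [Field K] [AddCommGroup M] [Module K M]

theorem exists_le_finrank_eq (V : Submodule K M) {r : ℕ} (hr : r ≤ finrank K V) :
    ∃ A ≤ V, finrank K A = r := by
  obtain ⟨f, hf⟩ := exists_linearIndependent_of_le_finrank hr
  refine ⟨(span K (Set.range f)).map V.subtype, map_subtype_le _ _, ?_⟩
  rw [finrank_map_subtype_eq, finrank_span_eq_card hf, Fintype.card_fin]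

theorem exists_le_of_subset_iUnion {ι : Type*} (hcard : ENat.card ι < ENat.card K)
    {A : Submodule K M} {p : ι → Submodule K M} (hA : (A : Set M) ⊆ ⋃ i, p i) : ∃ i, A ≤ p i := by
  have : Finite ι := ENat.card_lt_top.mp (hcard.trans_le le_top)
  cases nonempty_fintype ι
  by_contra! h
  have hne (i : ι) : (p i).submoduleOf A ≠ ⊤ := fun hi ↦ h i (submoduleOf_eq_top.mp hi)
  refine (iUnion_ssubset_of_forall_ne_top_of_card_lt Finset.univ _ hne ?_).ne ?_
  · simpa using hcard
  · refine Set.eq_univ_of_forall fun a ↦ ?_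
    simpa [submoduleOf] using hA a.2

end VectorSpace

section Stabilizer

variable {K L : Type*} [Field K] [Field L] [Algebra K L] [Algebra.IsAlgebraic K L]

/-- The stabilizer of a `K`-subspace `V` of an algebraic extension `L`, that is, the largest
intermediate field over which `V` is a vector space. Its underlying subspace is `V / V`. -/
def stabilizerField (V : Submodule K L) : IntermediateField K L :=
  Subalgebra.IsAlgebraic.toIntermediateField
    (S :=
      { carrier := (V / V : Submodule K L)
        mul_mem' := fun hx hy v hv ↦ by simpa only [mul_assoc] using hx _ (hy v hv)
        add_mem' := add_mem
        algebraMap_mem' := fun c v hv ↦ by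
          simpa only [← Algebra.smul_def] using V.smul_mem c hv })
    fun x _ ↦ Algebra.IsAlgebraic.isAlgebraic x

theorem toSubmodule_stabilizerField (V : Submodule K L) :
    Subalgebra.toSubmodule (stabilizerField V).toSubalgebra = V / V :=
  rfl

theorem stabilizerField_smul {a : L} (ha : a ≠ 0) (V : Submodule K L) :
    stabilizerField (a • V) = stabilizerField V := by
  ext x
  have hmem (v : L) : x * (a * v) ∈ a • V ↔ x * v ∈ V := by
    rw [mul_left_comm, mul_mem_smul_iff (mem_nonZeroDivisors_of_ne_zero ha)]
  refine ⟨fun hx v hv ↦ (hmem v).1 (hx _ (smul_mem_pointwise_smul v a V hv)), ?_⟩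
  rintro hx _ ⟨v, hv, rfl⟩
  exact (hmem v).2 (hx v hv)

theorem restrictScalars_span_stabilizerField (V : Submodule K L) :
    (span (stabilizerField V) (V : Set L)).restrictScalars K = V := by
  let W : Submodule (stabilizerField V) L := { V with smul_mem' := fun c v hv ↦ c.2 v hv }
  exact congrArg (restrictScalars K) (span_eq W)

end Stabilizer

section Kneser

variable {K L : Type*} [Field K] [Field L] [Algebra K L]

theorem finrank_smul {a : L} (ha : a ≠ 0) (V : Submodule K L) :
    finrank K ↥(a • V) = finrank K V :=
  (equivMapOfInjective _ (mul_right_injective₀ ha) V).finrank_eq.symm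

theorem inf_inv_smul_mul_sup_smul_le (A B : Submodule K L) {b : L} (hb : b ≠ 0) :
    (A ⊓ b⁻¹ • B) * (B ⊔ b • A) ≤ A * B := by
  rw [Submodule.mul_sup]
  refine sup_le (mul_le_mul' inf_le_left le_rfl) ?_
  calc (A ⊓ b⁻¹ • B) * (b • A) ≤ b⁻¹ • B * b • A := mul_le_mul' inf_le_right le_rfl
    _ = A * B := by
      rw [← mul_smul_mul_comm, inv_mul_cancel₀ hb, one_smul, mul_comm]

variable [FiniteDimensional K L]

theorem finrank_inf_inv_smul_add_finrank_sup_smul (A B : Submodule K L) {b : L} (hb : b ≠ 0) :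
    finrank K ↥(A ⊓ b⁻¹ • B) + finrank K ↥(B ⊔ b • A) = finrank K A + finrank K B := by
  have hsup : B ⊔ b • A = b • (A ⊔ b⁻¹ • B) := by
    rw [smul_sup', smul_inv_smul₀ hb, sup_comm]
  rw [hsup, finrank_smul hb, add_comm, finrank_sup_add_finrank_inf_eq,
    finrank_smul (inv_ne_zero hb)]

theorem exists_le_finrank_add_finrank_le_of_one_mem {A : Submodule K L} (B : Submodule K L)
    (hA : 1 ∈ A) :
    ∃ V, B ≤ V ∧ V ≤ A * B ∧
      finrank K A + finrank K B ≤ finrank K V + finrank K (stabilizerField V) := by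
  induction A using WellFoundedLT.induction generalizing B with
  | ind A ih =>
    by_cases hAB : A * B ≤ B
    · refine ⟨B, le_rfl, fun b hb ↦ by simpa using mul_mem_mul hA hb, ?_⟩
      rw [add_comm]
      exact Nat.add_le_add_left (finrank_mono (le_div_iff_mul_le.mpr hAB)) _
    · obtain ⟨a, ha, b, hb, hab⟩ : ∃ a ∈ A, ∃ b ∈ B, a * b ∉ B := by
        simpa only [Submodule.mul_le, not_forall, exists_prop] using hAB
      have hb0 : b ≠ 0 := by
        rintro rfl
        exact hab (by simp)
      have hmem (x : L) : x ∈ b⁻¹ • B ↔ x * b ∈ B := by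
        rw [mem_smul_iff_inv_mul_mem (inv_ne_zero hb0), inv_inv, mul_comm]
      have hlt : A ⊓ b⁻¹ • B < A :=
        inf_lt_left.mpr fun hle ↦ hab ((hmem a).mp (hle ha))
      obtain ⟨V, hBV, hVAB, hdim⟩ := ih _ hlt (B ⊔ b • A)
        ⟨hA, (hmem 1).mpr (by rwa [one_mul])⟩
      rw [finrank_inf_inv_smul_add_finrank_sup_smul A B hb0] at hdim
      exact ⟨V, le_sup_left.trans hBV,
        hVAB.trans (inf_inv_smul_mul_sup_smul_le A B hb0), hdim⟩

theorem exists_smul_le_finrank_add_finrank_le {A : Submodule K L} (B : Submodule K L)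
    {a : L} (ha : a ∈ A) (ha0 : a ≠ 0) :
    ∃ V, a • B ≤ V ∧ V ≤ A * B ∧
      finrank K A + finrank K B ≤ finrank K V + finrank K (stabilizerField V) := by
  obtain ⟨V, hBV, hVAB, hdim⟩ := exists_le_finrank_add_finrank_le_of_one_mem (A := a⁻¹ • A) B
    ⟨a, ha, inv_mul_cancel₀ ha0⟩
  refine ⟨a • V, smul_mono_right a hBV, ?_, ?_⟩
  · calc a • V ≤ a • (a⁻¹ • A * B) := smul_mono_right a hVAB
      _ = A * B := by rw [smul_mul_assoc, smul_inv_smul₀ ha0]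
  · rwa [finrank_smul ha0, stabilizerField_smul ha0, ← finrank_smul (inv_ne_zero ha0) A]

/-- A linear version of Kneser's theorem. -/
theorem finrank_add_finrank_le_finrank_mul_add_finrank_stabilizerField
    (hcard : ENat.card (IntermediateField K L) < ENat.card K) {A : Submodule K L} (hA : A ≠ ⊥)
    (B : Submodule K L) :
    finrank K A + finrank K B ≤ finrank K ↥(A * B) + finrank K (stabilizerField (A * B)) := by
  let S (H : IntermediateField K L) : Set L :=
    {a | ∃ V, a • B ≤ V ∧ V ≤ A * B ∧ stabilizerField V = H ∧
      finrank K A + finrank K B ≤ finrank K V + finrank K H}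
  have hcover : (A : Set L) ⊆ ⋃ H, span K (S H) := by
    intro a ha
    rcases eq_or_ne a 0 with rfl | ha0
    · exact Set.mem_iUnion.mpr ⟨⊥, zero_mem _⟩
    · obtain ⟨V, haV, hV, hdim⟩ := exists_smul_le_finrank_add_finrank_le B ha ha0
      exact Set.mem_iUnion.mpr ⟨_, subset_span ⟨V, haV, hV, rfl, hdim⟩⟩
  obtain ⟨H, hAH⟩ := exists_le_of_subset_iUnion hcard hcover
  let T := Subalgebra.toSubmodule H.toSubalgebra
  have hstab : T ≤ A * B / (A * B) := by
    suffices hle : span K (S H) ≤ A * B / (T * B) by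
      rw [Submodule.le_div_iff_mul_le, mul_left_comm]
      exact le_div_iff_mul_le.mp (hAH.trans hle)
    rw [span_le]
    rintro a ⟨V, haV, hV, rfl, -⟩
    suffices h : a • (T * B) ≤ A * B from fun y hy ↦ h (smul_mem_pointwise_smul y a _ hy)
    calc a • (T * B) = T * a • B := (mul_smul_comm a T B).symm
      _ ≤ T * V := mul_le_mul' le_rfl haV
      _ ≤ V := le_div_iff_mul_le.mp (toSubmodule_stabilizerField V).le
      _ ≤ A * B := hV
  obtain ⟨a, V, -, hV, -, hdim⟩ : (S H).Nonempty := by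
    refine Set.nonempty_iff_ne_empty.mpr fun hS ↦ hA ?_
    simpa [hS] using hAH
  exact hdim.trans (add_le_add (finrank_mono hV) (finrank_mono hstab))

end Kneser

section LowerBound

theorem ceilDiv_add_ceilDiv_sub_one_mul_le {d a b r s m : ℕ} (hd : 0 < d) (hr : r ≤ d * a)
    (hs : s ≤ d * b) (hm : d * a + d * b ≤ m + d) : (r ⌈/⌉ d + s ⌈/⌉ d - 1) * d ≤ m := by
  have hra : r ⌈/⌉ d ≤ a := (ceilDiv_le_iff_le_mul hd).mpr hr
  have hsb : s ⌈/⌉ d ≤ b := (ceilDiv_le_iff_le_mul hd).mpr hs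
  calc (r ⌈/⌉ d + s ⌈/⌉ d - 1) * d ≤ (a + b - 1) * d := by gcongr
    _ = d * a + d * b - d := by rw [Nat.sub_mul]; ring_nf
    _ ≤ m := by omega

theorem span_mul_of_tower (R : Type*) {S A : Type*} [CommSemiring R] [CommSemiring S] [Semiring A]
    [Algebra R S] [Algebra R A] [Algebra S A] [IsScalarTower R S A] (X Y : Submodule R A) :
    span S ((X * Y : Submodule R A) : Set A) = span S (X : Set A) * span S (Y : Set A) := by
  rw [mul_eq_span_mul_set, span_span_of_tower, span_mul_span]

variable {K L : Type*} [Field K] [Field L] [Algebra K L] [FiniteDimensional K L]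

theorem exists_intermediateField_le_finrank_mul_of_card_lt
    (hcard : ENat.card (IntermediateField K L) < ENat.card K) {A : Submodule K L} (hA : A ≠ ⊥)
    (B : Submodule K L) :
    ∃ E : IntermediateField K L,
      (finrank K A ⌈/⌉ finrank K E + finrank K B ⌈/⌉ finrank K E - 1) * finrank K E ≤
        finrank K ↥(A * B) := by
  let E := stabilizerField (A * B)
  let hull (X : Submodule K L) : Submodule E L := span E (X : Set L)
  have hle (X : Submodule K L) : X ≤ (hull X).restrictScalars K := subset_span
  have hfinrank (X : Submodule K L) :
      finrank K ↥((hull X).restrictScalars K) = finrank K E * finrank E (hull X) :=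
    (finrank_mul_finrank K E (hull X)).symm
  have hmul : (hull A).restrictScalars K * (hull B).restrictScalars K = A * B := by
    rw [← restrictScalars_mul, ← span_mul_of_tower]
    exact restrictScalars_span_stabilizerField (A * B)
  have hdim := finrank_add_finrank_le_finrank_mul_add_finrank_stabilizerField hcard
    (ne_bot_of_le_ne_bot hA (hle A)) ((hull B).restrictScalars K)
  rw [hmul, hfinrank, hfinrank] at hdim
  exact ⟨E, ceilDiv_add_ceilDiv_sub_one_mul_le finrank_pos
    ((finrank_mono (hle A)).trans_eq (hfinrank A))
    ((finrank_mono (hle B)).trans_eq (hfinrank B)) hdim⟩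

end LowerBound

section BaseChange

variable {K L M : Type*} [Field K] [Field L] [Field M] [Algebra K L] [Algebra K M] [Algebra L M]
  [IsScalarTower K L M]

/-- The `K'`-subspace of `M` generated by a `K`-subspace of `L`, for a tower `K ⊆ L ⊆ M` and an
intermediate field `K'` of `M / K`. When `K'` and `L` are linearly disjoint over `K`, this is the
scalar extension of `X` from `K` to `K'`. -/
def extendScalars (K' : IntermediateField K M) (X : Submodule K L) : Submodule K' M :=
  span K' (X.map (IsScalarTower.toAlgHom K L M).toLinearMap : Set M)

theorem extendScalars_mul (K' : IntermediateField K M) (X Y : Submodule K L) :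
    extendScalars K' (X * Y) = extendScalars K' X * extendScalars K' Y := by
  simp only [extendScalars, Submodule.map_mul, span_mul_of_tower]

theorem finrank_extendScalars {K' : IntermediateField K M} (hdisj : K'.LinearDisjoint L)
    (X : Submodule K L) [FiniteDimensional K X] :
    finrank K' (extendScalars K' X) = finrank K X := by
  let b := finBasis K X
  have hb : LinearIndependent K (fun i ↦ (b i : L)) :=
    b.linearIndependent.map' X.subtype X.ker_subtype
  have hX : span K (Set.range fun i ↦ (b i : L)) = X := by
    have hmap := congrArg (map X.subtype) b.span_eq
    rwa [map_span, ← Set.range_comp, map_subtype_top] at hmap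
  have hspan : extendScalars K' X = span K' (Set.range (algebraMap L M ∘ fun i ↦ (b i : L))) := by
    have hmap := congrArg (map (IsScalarTower.toAlgHom K L M).toLinearMap) hX
    rw [map_span, ← Set.range_comp] at hmap
    rw [extendScalars, ← hmap, span_span_of_tower]
    rfl
  rw [hspan, finrank_span_eq_card (hdisj.linearIndependent_right' hb), Fintype.card_fin]

theorem exists_intermediateField_le_finrank_mul_of_linearDisjoint {K' : IntermediateField K M}
    [FiniteDimensional K L] [FiniteDimensional K' M] (hdisj : K'.LinearDisjoint L)
    (hcard : ENat.card (IntermediateField K' M) < ENat.card K') {A : Submodule K L} (hA : A ≠ ⊥)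
    (B : Submodule K L) :
    ∃ E : IntermediateField K' M,
      (finrank K A ⌈/⌉ finrank K' E + finrank K B ⌈/⌉ finrank K' E - 1) * finrank K' E ≤
        finrank K ↥(A * B) := by
  have hA' : extendScalars K' A ≠ ⊥ := by
    rwa [← one_le_finrank_iff, finrank_extendScalars hdisj, one_le_finrank_iff]
  obtain ⟨E, hE⟩ :=
    exists_intermediateField_le_finrank_mul_of_card_lt hcard hA' (extendScalars K' B)
  rw [← extendScalars_mul] at hE
  exact ⟨E, by simpa only [finrank_extendScalars hdisj] using hE⟩

end BaseChange

section FiniteBaseField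

theorem card_intermediateField_le (K L : Type*) [Field K] [Field L] [Algebra K L]
    [FiniteDimensional K L] [IsGalois K L] :
    Nat.card (IntermediateField K L) ≤ 2 ^ finrank K L := by
  calc Nat.card (IntermediateField K L) = Nat.card (Subgroup Gal(L/K)) :=
        Nat.card_congr
          (IsGalois.intermediateFieldEquivSubgroup.toEquiv.trans OrderDual.ofDual)
    _ ≤ Nat.card (Set Gal(L/K)) := Nat.card_le_card_of_injective _ SetLike.coe_injective
    _ = 2 ^ finrank K L := by
      classical
      rw [← IsGalois.card_aut_eq_finrank, Nat.card_eq_fintype_card, Nat.card_eq_fintype_card,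
        Fintype.card_set]

theorem exists_intermediateField_finrank_eq_of_dvd {K L : Type*} [Field K] [Field L]
    [Algebra K L] [Finite L] {d : ℕ} (hd : d ∣ finrank K L) :
    ∃ E : IntermediateField K L, finrank K E = d := by
  have : Finite K := Finite.of_injective _ (algebraMap K L).injective
  have : NeZero d := ⟨ne_zero_of_dvd_ne_zero finrank_pos.ne' hd⟩
  obtain ⟨p, hp⟩ := CharP.exists K
  have : Fact p.Prime := ⟨CharP.char_is_prime K p⟩
  have hdeg : finrank K (FiniteField.Extension K p d) = d := FiniteField.finrank_extension K p d
  obtain ⟨f⟩ := FiniteField.nonempty_algHom_of_finrank_dvd (hdeg.symm ▸ hd)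
  exact ⟨f.fieldRange, (AlgEquiv.ofInjectiveField f).toLinearEquiv.finrank_eq.symm.trans hdeg⟩

theorem exists_linearDisjoint_card_lt (K L : Type*) [Field K] [Field L] [Algebra K L] [Finite L] :
    ∃ (M : Type) (_ : Field M) (_ : Finite M) (_ : Algebra K M) (_ : Algebra L M)
      (_ : IsScalarTower K L M) (K' : IntermediateField K M),
      K'.LinearDisjoint L ∧ finrank K' M = finrank K L ∧
        ENat.card (IntermediateField K' M) < ENat.card K' := by
  have : Finite K := Finite.of_injective _ (algebraMap K L).injective
  obtain ⟨p, hp⟩ := CharP.exists L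
  have : Fact p.Prime := ⟨CharP.char_is_prime L p⟩
  obtain ⟨m, hnm, hm⟩ := Nat.exists_infinite_primes (finrank K L + 1)
  have : NeZero m := ⟨hm.ne_zero⟩
  let M := FiniteField.Extension L p m
  let _ : Algebra K M := ((algebraMap L M).comp (algebraMap K L)).toAlgebra
  have : IsScalarTower K L M := .of_algebraMap_eq' rfl
  have hLM : finrank L M = m := FiniteField.finrank_extension L p m
  have hKM : finrank K L * m = finrank K M := by
    rw [← finrank_mul_finrank K L M, hLM]
  obtain ⟨K', hK'⟩ := exists_intermediateField_finrank_eq_of_dvd (hKM ▸ dvd_mul_left m _)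
  have hK'M : finrank K' M = finrank K L := by
    refine Nat.eq_of_mul_eq_mul_left hm.pos ?_
    rw [mul_comm m (finrank K L), hKM, ← finrank_mul_finrank K K' M, hK']
  refine ⟨M, inferInstance, inferInstance, inferInstance, inferInstance, this, K', ?_, hK'M, ?_⟩
  · refine .of_finrank_coprime ?_
    rw [hK']
    exact Nat.coprime_of_lt_prime finrank_pos.ne' hnm hm
  · have hlt : Nat.card (IntermediateField K' M) < Nat.card K' :=
      calc Nat.card (IntermediateField K' M) ≤ 2 ^ finrank K L :=
            hK'M ▸ card_intermediateField_le K' M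
        _ < 2 ^ m := Nat.pow_lt_pow_right one_lt_two hnm
        _ ≤ Nat.card K ^ m := Nat.pow_le_pow_left Finite.one_lt_card m
        _ = Nat.card K' := by rw [Module.natCard_eq_pow_finrank (K := K) (V := K'), hK']
    rw [ENat.card_eq_coe_natCard, ENat.card_eq_coe_natCard]
    exact_mod_cast hlt

theorem exists_intermediateField_le_finrank_mul_of_finite {K L : Type*} [Field K] [Field L]
    [Algebra K L] [Finite L] {A : Submodule K L} (hA : A ≠ ⊥) (B : Submodule K L) :
    ∃ E : IntermediateField K L,
      (finrank K A ⌈/⌉ finrank K E + finrank K B ⌈/⌉ finrank K E - 1) * finrank K E ≤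
        finrank K ↥(A * B) := by
  obtain ⟨M, _, _, _, _, _, K', hdisj, hdeg, hcard⟩ := exists_linearDisjoint_card_lt K L
  obtain ⟨F, hF⟩ := exists_intermediateField_le_finrank_mul_of_linearDisjoint hdisj hcard hA B
  have hdvd : finrank K' F ∣ finrank K L := hdeg ▸ ⟨_, (finrank_mul_finrank K' F M).symm⟩
  obtain ⟨E, hE⟩ := exists_intermediateField_finrank_eq_of_dvd hdvd
  exact ⟨E, hE ▸ hF⟩

end FiniteBaseField

section FiniteSimpleExtension

variable {K L : Type*} [Field K] [Field L] [Algebra K L] [Finite (IntermediateField K L)]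

theorem exists_intermediateField_le_finrank_mul {A : Submodule K L} (hA : A ≠ ⊥)
    (B : Submodule K L) :
    ∃ E : IntermediateField K L,
      (finrank K A ⌈/⌉ finrank K E + finrank K B ⌈/⌉ finrank K E - 1) * finrank K E ≤
        finrank K ↥(A * B) := by
  have : FiniteDimensional K L := Field.FiniteDimensional.of_finite_intermediateField K L
  rcases finite_or_infinite K with _ | _
  · have : Finite L := Module.finite_of_finite K
    exact exists_intermediateField_le_finrank_mul_of_finite hA B
  · refine exists_intermediateField_le_finrank_mul_of_card_lt ?_ hA B
    rw [ENat.card_eq_top_of_infinite (α := K)]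
    exact ENat.card_lt_top_of_finite

end FiniteSimpleExtension

section UpperBound

variable {F L : Type*} [Field F] [Field L] [Algebra F L]

/-- The `F`-span of `1, x, …, x ^ (a - 1)`, the linear analogue of an arithmetic progression. -/
def powersSpan (F : Type*) {L : Type*} [Field F] [Field L] [Algebra F L] (x : L) (a : ℕ) :
    Submodule F L :=
  span F (Set.range fun i : Fin a ↦ x ^ (i : ℕ))

theorem finrank_powersSpan_le (x : L) (a : ℕ) : finrank F (powersSpan F x a) ≤ a :=
  (finrank_range_le_card _).trans_eq (Fintype.card_fin a)

theorem finrank_powersSpan {x : L} {a : ℕ} (ha : a ≤ (minpoly F x).natDegree) :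
    finrank F (powersSpan F x a) = a := by
  have hli := (linearIndependent_pow (K := F) x).comp _ (Fin.castLE_injective ha)
  exact (finrank_span_eq_card hli).trans (Fintype.card_fin a)

theorem powersSpan_mul_powersSpan_le (x : L) (a b : ℕ) :
    powersSpan F x a * powersSpan F x b ≤ powersSpan F x (a + b - 1) := by
  rw [powersSpan, powersSpan, span_mul_span, span_le]
  rintro _ ⟨_, ⟨i, rfl⟩, _, ⟨j, rfl⟩, rfl⟩
  exact subset_span ⟨⟨i + j, by omega⟩, pow_add x i j⟩

theorem exists_finrank_mul_le_of_adjoin_eq_top {K : Type*} [Field K] [Algebra K F] [Algebra K L]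
    [IsScalarTower K F L] [FiniteDimensional K L] {x : L} (hx : F⟮x⟯ = ⊤) {r s : ℕ}
    (hr : r ≤ finrank K L) (hs : s ≤ finrank K L) :
    ∃ A B : Submodule K L, finrank K A = r ∧ finrank K B = s ∧
      finrank K ↥(A * B) ≤ (r ⌈/⌉ finrank K F + s ⌈/⌉ finrank K F - 1) * finrank K F := by
  have : FiniteDimensional K F := .left K F L
  have : FiniteDimensional F L := .right K F L
  have hdeg := (Field.primitive_element_iff_minpoly_natDegree_eq F x).mp hx
  let P (a : ℕ) : Submodule K L := (powersSpan F x a).restrictScalars K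
  have hfinrank (a : ℕ) : finrank K (P a) = finrank K F * finrank F (powersSpan F x a) :=
    (finrank_mul_finrank K F (powersSpan F x a)).symm
  have hmul (a b : ℕ) : P a * P b ≤ P (a + b - 1) := by
    rw [← restrictScalars_mul]
    exact restrictScalars_mono K (powersSpan_mul_powersSpan_le x a b)
  have hexists {t : ℕ} (ht : t ≤ finrank K L) : ∃ A ≤ P (t ⌈/⌉ finrank K F), finrank K A = t := by
    refine exists_le_finrank_eq _ ?_
    rw [hfinrank, finrank_powersSpan]
    · exact le_smul_ceilDiv finrank_pos
    · rw [hdeg, ceilDiv_le_iff_le_mul finrank_pos, finrank_mul_finrank]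
      exact ht
  obtain ⟨A, hAP, hA⟩ := hexists hr
  obtain ⟨B, hBP, hB⟩ := hexists hs
  refine ⟨A, B, hA, hB, ?_⟩
  calc finrank K ↥(A * B) ≤ finrank K (P (r ⌈/⌉ finrank K F + s ⌈/⌉ finrank K F - 1)) :=
        finrank_mono ((mul_le_mul' hAP hBP).trans (hmul _ _))
    _ ≤ finrank K F * (r ⌈/⌉ finrank K F + s ⌈/⌉ finrank K F - 1) := by
      rw [hfinrank]
      exact Nat.mul_le_mul_left _ (finrank_powersSpan_le x _)
    _ = (r ⌈/⌉ finrank K F + s ⌈/⌉ finrank K F - 1) * finrank K F := mul_comm _ _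

theorem exists_finrank_mul_le_of_intermediateField {K : Type*} [Field K] [Algebra K L]
    [Finite (IntermediateField K L)] (E : IntermediateField K L) {r s : ℕ}
    (hr : r ≤ finrank K L) (hs : s ≤ finrank K L) :
    ∃ A B : Submodule K L, finrank K A = r ∧ finrank K B = s ∧
      finrank K ↥(A * B) ≤ (r ⌈/⌉ finrank K E + s ⌈/⌉ finrank K E - 1) * finrank K E := by
  have : FiniteDimensional K L := Field.FiniteDimensional.of_finite_intermediateField K L
  have : Finite (IntermediateField E L) :=
    .of_injective _ (IntermediateField.restrictScalars_injective K)
  obtain ⟨x, hx⟩ := Field.exists_primitive_element_of_finite_intermediateField E L ⊤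
  exact exists_finrank_mul_le_of_adjoin_eq_top hx hr hs

end UpperBound

theorem dvd_finrank_iff_exists_intermediateField {K L : Type*} [Field K] [Field L] [Algebra K L]
    [FiniteDimensional K L] [IsGalois K L]
    (hdiv : ∀ d : ℕ, d ∣ finrank K L → ∃ H : Subgroup Gal(L/K), Nat.card H = d) {d : ℕ} :
    d ∣ finrank K L ↔ ∃ E : IntermediateField K L, finrank K E = d := by
  constructor
  · rintro ⟨e, he⟩
    obtain ⟨H, hH⟩ := hdiv e ⟨d, by rw [he, mul_comm]⟩
    refine ⟨IntermediateField.fixedField H, ?_⟩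
    have hmul := finrank_mul_finrank K (IntermediateField.fixedField H) L
    rw [IntermediateField.finrank_fixedField_eq_card, hH, he] at hmul
    exact Nat.eq_of_mul_eq_mul_right (hH ▸ Nat.card_pos) hmul
  · rintro ⟨E, rfl⟩
    exact ⟨_, (finrank_mul_finrank K E L).symm⟩

end LinearKneser

open LinearKneser

/-- The finiteness of the set of intermediate fields says that `L` is a finite simple extension
of `K`. -/
theorem stmt_12_general (K L : Type*) [Field K] [Field L] [Algebra K L]
    [Finite (IntermediateField K L)] {r s : ℕ} (hr : 0 < r) (hrn : r ≤ finrank K L)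
    (hsn : s ≤ finrank K L) :
    sInf {m : ℕ | ∃ A B : Submodule K L,
        finrank K A = r ∧ finrank K B = s ∧ finrank K ↥(A * B) = m} =
      sInf {m : ℕ | ∃ E : IntermediateField K L,
        m = (r ⌈/⌉ finrank K E + s ⌈/⌉ finrank K E - 1) * finrank K E} := by
  refine csInf_eq_csInf_of_forall_exists_le ?_ ?_
  · rintro _ ⟨A, B, rfl, rfl, rfl⟩
    have hA : A ≠ ⊥ := by
      rintro rfl
      simp at hr
    obtain ⟨E, hE⟩ := exists_intermediateField_le_finrank_mul hA B
    exact ⟨_, ⟨E, rfl⟩, hE⟩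
  · rintro _ ⟨E, rfl⟩
    obtain ⟨A, B, hA, hB, hAB⟩ := exists_finrank_mul_le_of_intermediateField E hrn hsn
    exact ⟨_, ⟨A, B, hA, hB, rfl⟩, hAB⟩

/-- Corollary 6.1: let `K ⊆ L` be a finite Galois extension with Galois group `G` of
order `n`, such that every divisor `d` of `n` is the cardinality of a subgroup of `G`.
Then for positive `r, s ≤ n`, the minimum of `dim_K ⟨AB⟩` over `K`-subspaces `A, B` of
`L` with `dim_K A = r`, `dim_K B = s` equals `min_{d ∣ n} (⌈r/d⌉ + ⌈s/d⌉ - 1)·d`. -/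
theorem stmt_12 (K L : Type*) [Field K] [Field L] [Algebra K L]
    [FiniteDimensional K L] [IsGalois K L]
    (n : ℕ) (hn : Module.finrank K L = n)
    (hdiv : ∀ d : ℕ, d ∣ n → ∃ H : Subgroup (L ≃ₐ[K] L), Nat.card H = d)
    (r s : ℕ) (hr : 0 < r) (hs : 0 < s) (hrn : r ≤ n) (hsn : s ≤ n) :
    sInf {m : ℕ | ∃ A B : Submodule K L,
        Module.finrank K A = r ∧ Module.finrank K B = s ∧ Module.finrank K ↥(A * B) = m}
      = sInf {m : ℕ | ∃ d : ℕ, d ∣ n ∧ m = (r ⌈/⌉ d + s ⌈/⌉ d - 1) * d} := by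
  subst hn
  have : Finite (IntermediateField K L) :=
    (Field.exists_primitive_element_iff_finite_intermediateField K L).mp
      ⟨inferInstance, Field.exists_primitive_element K L⟩
  simp only [stmt_12_general K L hr hrn hsn, dvd_finrank_iff_exists_intermediateField hdiv,
    exists_exists_eq_and]
end

section
/- Let K ⊆ L be a finite Galois extension with abelian Galois group G of order n. Then for all positive integers r, s with r, s ≤ n, the minimum of dim_K⟨AB⟩ over all K-subspaces A, B of L with dim_K A = r and dim_K B = s equals the minimum of |A'B'| over all subsets A', B' ⊆ G with |A'| = r and |B'| = s. -/
open scoped Pointwise Classical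

/-!
Both minima equal the Eliahou–Kervaire number `κ_n(r, s)`, where `n = [L : K] = |G|`.

Lower bound for `L`: the linear Kneser theorem `dim A + dim B ≤ dim AB + dim Stab(AB)`, applied to
`SA` and `SB` with `S = Stab(AB)`, bounds `dim AB` below by the term of `κ_n` for `d = dim S`.
The theorem is first proved locally at each nonzero `a ∈ A`, with a subspace `V` such that
`aB ⊆ V ⊆ AB` in place of `AB`, by induction along the transform `(A, B) ↦ (A ∩ c⁻¹B, cA + B)`.
Separability leaves finitely many candidates for `Stab V`, and over an infinite `K` the space `A` is
not a finite union of proper subspaces, so one candidate serves all of `A`. A finite `K` is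
replaced by `K(X)`, which changes none of the dimensions involved.

Lower bound for `G`: realise `G` as the Galois group of an extension of fields containing enough
roots of unity. By Hilbert 90 each character of `G` has an eigenvector in the extension; these are
linearly independent and multiply like the characters, so sets of characters become subspaces and
the bound for fields applies to them.

Upper bounds: for the optimal `d ∣ n`, use the preimages of initial segments of a quotient of order
`n / d`, numbered subadditively by mixed-radix expansion along a decomposition into cyclic groups,
respectively the spans of the first powers of a primitive element of `L` over an intermediate field
of degree `d` over `K`.
-/

section Kappa

/-- The Eliahou–Kervaire number `κ_n(r, s) = min_{d ∣ n} d (⌈r/d⌉ + ⌈s/d⌉ - 1)`, the common value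
of the two minima. It is meant for `n, r, s ≥ 1`, where the subtraction is not truncated. -/
noncomputable def kappa (n r s : ℕ) : ℕ :=
  sInf {m | ∃ d, d ∣ n ∧ m = d * (r ⌈/⌉ d + s ⌈/⌉ d - 1)}

theorem kappa_le_mul {n d r s a b : ℕ} (hn : 0 < n) (hd : d ∣ n) (hr : r ≤ d * a)
    (hs : s ≤ d * b) : kappa n r s ≤ d * (a + b - 1) := by
  have hd0 : 0 < d := Nat.pos_of_dvd_of_pos hd hn
  have ha : r ⌈/⌉ d ≤ a := (ceilDiv_le_iff_le_mul hd0).2 hr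
  have hb : s ⌈/⌉ d ≤ b := (ceilDiv_le_iff_le_mul hd0).2 hs
  calc kappa n r s ≤ d * (r ⌈/⌉ d + s ⌈/⌉ d - 1) := Nat.sInf_le ⟨d, hd, rfl⟩
    _ ≤ d * (a + b - 1) := by gcongr

theorem exists_kappa_eq (n r s : ℕ) :
    ∃ d, d ∣ n ∧ kappa n r s = d * (r ⌈/⌉ d + s ⌈/⌉ d - 1) :=
  Nat.sInf_mem (s := {m | ∃ d, d ∣ n ∧ m = d * (r ⌈/⌉ d + s ⌈/⌉ d - 1)}) ⟨_, 1, one_dvd n, rfl⟩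

end Kappa

section LinearKneser

open Module

variable {K L : Type*} [Field K] [Field L] [Algebra K L]

theorem finrank_map_mulLeft {c : L} (hc : c ≠ 0) (V : Submodule K L) :
    finrank K (V.map (LinearMap.mulLeft K c)) = finrank K V :=
  (Submodule.equivMapOfInjective _ (mul_right_injective₀ hc) V).finrank_eq.symm

theorem finrank_inf_comap_add_finrank_map_sup [FiniteDimensional K L] {c : L} (hc : c ≠ 0)
    (A B : Submodule K L) :
    finrank K ↥(A ⊓ B.comap (LinearMap.mulLeft K c)) +
      finrank K ↥(A.map (LinearMap.mulLeft K c) ⊔ B) = finrank K A + finrank K B := by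
  rw [← finrank_map_mulLeft hc (A ⊓ _), ← Submodule.map_inf_eq_map_inf_comap, add_comm,
    Submodule.finrank_sup_add_finrank_inf_eq, finrank_map_mulLeft hc]

theorem inf_comap_mul_map_sup_le (c : L) (A B : Submodule K L) :
    (A ⊓ B.comap (LinearMap.mulLeft K c)) * (A.map (LinearMap.mulLeft K c) ⊔ B) ≤ A * B := by
  rw [Submodule.mul_sup, sup_le_iff]
  refine ⟨Submodule.mul_le.2 ?_, mul_le_mul_left inf_le_left _⟩
  rintro x ⟨-, hx⟩ _ ⟨y, hy, rfl⟩
  have : y * (c * x) ∈ A * B := Submodule.mul_mem_mul hy hx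
  convert this using 1
  simp only [LinearMap.mulLeft_apply]; ring

/-- The stabilizer `{x | x V ⊆ V}` of a subspace `V`, as an intermediate field. -/
noncomputable def mulStabilizer [Algebra.IsAlgebraic K L] (V : Submodule K L) :
    IntermediateField K L :=
  subalgebraEquivIntermediateField
    { V / V with
      mul_mem' := fun {x y} hx hy v hv ↦ by simpa only [mul_assoc] using hx _ (hy v hv)
      algebraMap_mem' := fun c v hv ↦ by simpa only [← Algebra.smul_def] using V.smul_mem c hv }

theorem le_mulStabilizer_iff [Algebra.IsAlgebraic K L] {F : IntermediateField K L}
    {V : Submodule K L} :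
    F ≤ mulStabilizer V ↔ F.toSubalgebra.toSubmodule * V ≤ V :=
  (Submodule.mul_le (M := F.toSubalgebra.toSubmodule)).symm

theorem finrank_dvd_of_le_mulStabilizer [Algebra.IsAlgebraic K L] {F : IntermediateField K L}
    {V : Submodule K L} (h : F ≤ mulStabilizer V) : finrank K F ∣ finrank K V := by
  let V' : Submodule F L := { V with smul_mem' := fun x v hv ↦ h x.2 v hv }
  exact Dvd.intro _ (finrank_mul_finrank K F V')

theorem exists_finrank_add_le_finrank_add_mulStabilizer [FiniteDimensional K L]
    {A B : Submodule K L} {a : L} (ha : a ∈ A) (ha0 : a ≠ 0) :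
    ∃ V : Submodule K L, B.map (LinearMap.mulLeft K a) ≤ V ∧ V ≤ A * B ∧
      finrank K A + finrank K B ≤ finrank K V + finrank K (mulStabilizer V) := by
  induction A using WellFoundedLT.induction generalizing B with | ind A ih
  by_cases h : ∀ c, c * a ∈ B → A.map (LinearMap.mulLeft K c) ≤ B
  · refine ⟨B.map (LinearMap.mulLeft K a), le_rfl, ?_, ?_⟩
    · rintro _ ⟨b, hb, rfl⟩
      exact Submodule.mul_mem_mul ha hb
    have hle : A.map (LinearMap.mulLeft K a⁻¹) ≤
        (mulStabilizer (B.map (LinearMap.mulLeft K a))).toSubalgebra.toSubmodule := by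
      rintro _ ⟨x, hx, rfl⟩ _ ⟨b, hb, rfl⟩
      refine ⟨a⁻¹ * b * x, h (a⁻¹ * b) (by simpa [mul_right_comm, ha0]) ⟨x, hx, rfl⟩, ?_⟩
      simp only [LinearMap.mulLeft_apply]; ring
    calc finrank K A + finrank K B
        = finrank K (B.map (LinearMap.mulLeft K a)) +
          finrank K (A.map (LinearMap.mulLeft K a⁻¹)) := by
          rw [finrank_map_mulLeft ha0, finrank_map_mulLeft (inv_ne_zero ha0), add_comm]
      _ ≤ _ := by gcongr; exact Submodule.finrank_mono hle
  · push Not at h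
    obtain ⟨c, hca, hc⟩ := h
    have hc0 : c ≠ 0 := by
      rintro rfl
      exact hc (by rintro _ ⟨x, -, rfl⟩; simp)
    have hlt : A ⊓ B.comap (LinearMap.mulLeft K c) < A :=
      inf_lt_left.2 fun hA ↦ hc (Submodule.map_le_iff_le_comap.2 hA)
    obtain ⟨V, hBV, hV, hle⟩ := ih _ hlt (B := A.map (LinearMap.mulLeft K c) ⊔ B) ⟨ha, hca⟩
    exact ⟨V, (Submodule.map_mono le_sup_right).trans hBV,
      hV.trans (inf_comap_mul_map_sup_le c A B),
      (finrank_inf_comap_add_finrank_map_sup hc0 A B).symm.trans_le hle⟩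

theorem finrank_add_finrank_le_finrank_mul_add_mulStabilizer [FiniteDimensional K L] [Infinite K]
    [Algebra.IsSeparable K L] {A : Submodule K L} (hA : A ≠ ⊥) (B : Submodule K L) :
    finrank K A + finrank K B ≤ finrank K ↥(A * B) + finrank K (mulStabilizer (A * B)) := by
  have : Finite (IntermediateField K L) :=
    Field.finite_intermediateField_of_exists_primitive_element K L
      (Field.exists_primitive_element K L)
  let ι := {F : IntermediateField K L //
    finrank K A + finrank K B ≤ finrank K ↥(A * B) + finrank K F}
  let p (F : ι) : Submodule K L := A * B / (F.1.toSubalgebra.toSubmodule * B)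
  have mem_p {a : L} (ha : a ∈ A) (ha0 : a ≠ 0) : ∃ F, a ∈ p F := by
    obtain ⟨V, hBV, hV, hle⟩ := exists_finrank_add_le_finrank_add_mulStabilizer (B := B) ha ha0
    refine ⟨⟨mulStabilizer V, hle.trans (by gcongr; exact Submodule.finrank_mono hV)⟩,
      fun y hy ↦ hV ?_⟩
    suffices h : (mulStabilizer V).toSubalgebra.toSubmodule * B ≤
        V.comap (LinearMap.mulLeft K a) from h hy
    refine Submodule.mul_le.2 fun x hx b hb ↦ ?_
    simpa [mul_left_comm] using hx _ (hBV ⟨b, hb, rfl⟩)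
  obtain ⟨a₀, ha₀, ha₀0⟩ := A.ne_bot_iff.1 hA
  have cover : ⋃ F, ((p F).comap A.subtype : Set A) = Set.univ := by
    refine Set.eq_univ_of_forall fun ⟨a, ha⟩ ↦ Set.mem_iUnion.2 ?_
    obtain rfl | ha0 := eq_or_ne a 0
    · exact (mem_p ha₀ ha₀0).imp fun F _ ↦ (p F).zero_mem
    · exact mem_p ha ha0
  obtain ⟨⟨F, hF⟩, hp⟩ := Subspace.exists_eq_top_of_iUnion_eq_univ cover
  have hAF : A * (F.toSubalgebra.toSubmodule * B) ≤ A * B :=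
    Submodule.le_div_iff_mul_le.1 (Submodule.comap_subtype_eq_top.1 hp)
  have hstab : F ≤ mulStabilizer (A * B) := by
    rwa [le_mulStabilizer_iff, mul_left_comm]
  exact hF.trans (by gcongr; exact IntermediateField.finrank_le_of_le_right hstab)

theorem kappa_le_finrank_mul_of_infinite [FiniteDimensional K L] [Infinite K]
    [Algebra.IsSeparable K L] {A : Submodule K L} (hA : A ≠ ⊥) (B : Submodule K L) :
    kappa (finrank K L) (finrank K A) (finrank K B) ≤ finrank K ↥(A * B) := by
  set T := mulStabilizer (A * B)
  set S := T.toSubalgebra.toSubmodule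
  have hS : S * S = S := T.toSubalgebra.isIdempotentElem_toSubmodule
  have le_S_mul (V : Submodule K L) : V ≤ S * V :=
    (one_mul V).symm.le.trans (mul_le_mul_left (Submodule.one_le.2 T.one_mem) V)
  have dvd_S_mul (V : Submodule K L) : finrank K T ∣ finrank K ↥(S * V) :=
    finrank_dvd_of_le_mulStabilizer (le_mulStabilizer_iff.2 (by rw [← mul_assoc, hS]))
  have hAB : S * (A * B) = A * B := (le_mulStabilizer_iff.1 le_rfl).antisymm (le_S_mul _)
  have hmul : S * A * (S * B) = A * B := by rw [mul_mul_mul_comm, hS, hAB]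
  obtain ⟨a, ha⟩ := dvd_S_mul A
  obtain ⟨b, hb⟩ := dvd_S_mul B
  obtain ⟨m, hm⟩ := hAB ▸ dvd_S_mul (A * B)
  have kneser := finrank_add_finrank_le_finrank_mul_add_mulStabilizer
    (ne_bot_of_le_ne_bot hA (le_S_mul A)) (S * B)
  rw [hmul, ha, hb, hm, ← mul_add, ← mul_add_one] at kneser
  have hab : a + b ≤ m + 1 := Nat.le_of_mul_le_mul_left kneser finrank_pos
  rw [hm]
  calc kappa (finrank K L) (finrank K A) (finrank K B) ≤ finrank K T * (a + b - 1) :=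
        kappa_le_mul finrank_pos (finrank_dvd_finrank_right K T L)
          (ha ▸ Submodule.finrank_mono (le_S_mul A)) (hb ▸ Submodule.finrank_mono (le_S_mul B))
    _ ≤ finrank K T * m := by gcongr; lia

end LinearKneser

section BaseChange

open Module TensorProduct

variable (E : Type*) {K L : Type*} (M : Type*) [Field K] [Field E] [Field L] [Field M]
  [Algebra K E] [Algebra K L] [Algebra K M] [Algebra E M] [Algebra L M]
  [IsScalarTower K E M] [IsScalarTower K L M]

/-- The `E`-subspace of `M` generated by a `K`-subspace `W` of `L`. If `M = E ⊗ L`, this is the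
extension of scalars of `W`. -/
def extendScalars (W : Submodule K L) : Submodule E M :=
  Submodule.span E (W.map (IsScalarTower.toAlgHom K L M).toLinearMap : Set M)

theorem extendScalars_mul (A B : Submodule K L) :
    extendScalars E M (A * B) = extendScalars E M A * extendScalars E M B := by
  simp only [extendScalars]
  rw [Submodule.map_mul, Submodule.span_mul_span, Submodule.mul_eq_span_mul_set,
    Submodule.span_span_of_tower]

variable [Algebra.IsPushout K E L M]

theorem finrank_extendScalars (W : Submodule K L) :
    finrank E (extendScalars E M W) = finrank K W := by
  let b := Basis.ofVectorSpace K W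
  have hb : LinearIndependent K fun i ↦ (b i : L) :=
    b.linearIndependent.map' W.subtype W.ker_subtype
  have hb' : LinearIndependent E fun i ↦ algebraMap L M (b i) := by
    simpa [Function.comp_def, Algebra.IsPushout.equiv_tmul] using
      (Module.Flat.linearIndependent_one_tmul (S := E) hb).map'
        (Algebra.IsPushout.equiv K E L M).toLinearMap
        (LinearEquiv.ker (Algebra.IsPushout.equiv K E L M).toLinearEquiv)
  have hspan : extendScalars E M W =
      Submodule.span E (Set.range fun i ↦ algebraMap L M (b i)) := by
    have hW : W = Submodule.span K (Set.range fun i ↦ (b i : L)) := by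
      simpa only [Submodule.map_span, ← Set.range_comp, Function.comp_def, Submodule.subtype_apply,
        Submodule.map_subtype_top] using congr(Submodule.map W.subtype $b.span_eq).symm
    conv_lhs => rw [extendScalars, hW, Submodule.map_span, Submodule.span_span_of_tower]
    rw [← Set.range_comp]
    rfl
  rw [hspan, finrank_eq_nat_card_basis (Basis.span hb'), finrank_eq_nat_card_basis b]

theorem finite_of_isPushout [FiniteDimensional K L] : FiniteDimensional E M :=
  Module.Finite.equiv (Algebra.IsPushout.equiv K E L M).toLinearEquiv

theorem finrank_eq_of_isPushout : finrank E M = finrank K L :=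
  (Algebra.IsPushout.equiv K E L M).toLinearEquiv.finrank_eq.symm.trans finrank_baseChange

theorem isSeparable_of_isPushout [FiniteDimensional K L] [Algebra.IsSeparable K L] :
    Algebra.IsSeparable E M := by
  have := finite_of_isPushout (K := K) (L := L) E M
  have := Algebra.FormallyUnramified.of_isSeparable K L
  rw [← Algebra.FormallyUnramified.iff_isSeparable]
  exact .of_equiv (Algebra.IsPushout.equiv K E L M)

open Polynomial

attribute [local instance] Polynomial.algebra FractionRing.liftAlgebra in
theorem kappa_le_finrank_mul {K L : Type*} [Field K] [Field L] [Algebra K L]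
    [FiniteDimensional K L] [Algebra.IsSeparable K L] {A : Submodule K L} (hA : A ≠ ⊥)
    (B : Submodule K L) :
    kappa (finrank K L) (finrank K A) (finrank K B) ≤ finrank K ↥(A * B) := by
  let E := FractionRing K[X]
  let M := FractionRing L[X]
  have : Infinite E := .of_injective _ (IsFractionRing.injective K[X] E)
  have := finite_of_isPushout (K := K) (L := L) E M
  have := isSeparable_of_isPushout (K := K) (L := L) E M
  have hA' : extendScalars E M A ≠ ⊥ := by
    rwa [← Submodule.one_le_finrank_iff, finrank_extendScalars E M, Submodule.one_le_finrank_iff]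
  have hle := kappa_le_finrank_mul_of_infinite hA' (extendScalars E M B)
  rwa [← extendScalars_mul, finrank_extendScalars, finrank_extendScalars, finrank_extendScalars,
    finrank_eq_of_isPushout (K := K) (L := L)] at hle

end BaseChange

section Characters

open Module

section Eigenvectors

variable {K L : Type*} [Field K] [Field L] [Algebra K L] [FiniteDimensional K L]

theorem exists_eigenvector (χ : Gal(L/K) →* Kˣ) :
    ∃ x : L, x ≠ 0 ∧ ∀ g : Gal(L/K), g x = (χ g : K) • x := by
  obtain ⟨β, hβ⟩ := groupCohomology.isMulCoboundary₁_of_isMulCocycle₁_of_aut_to_units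
    (fun g ↦ Units.map (algebraMap K L).toMonoidHom (χ g)) fun g h ↦ by
      ext; simp [mul_comm]
  refine ⟨β, β.ne_zero, fun g ↦ ?_⟩
  have := congr_arg Units.val (div_eq_iff_eq_mul.1 (hβ g))
  simpa [Algebra.smul_def] using this

theorem linearIndependent_eigenvectors {x : (Gal(L/K) →* Kˣ) → L} (hx0 : ∀ χ, x χ ≠ 0)
    (hx : ∀ χ (g : Gal(L/K)), g (x χ) = (χ g : K) • x χ) : LinearIndependent K x := by
  let toL (χ : Gal(L/K) →* Kˣ) : Gal(L/K) →* L :=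
    (algebraMap K L).toMonoidHom.comp ((Units.coeHom K).comp χ)
  have toL_injective : Function.Injective toL := fun χ ψ h ↦ by
    ext g
    exact (algebraMap K L).injective (DFunLike.congr_fun h g)
  have dedekind := (linearIndependent_monoidHom Gal(L/K) L).comp toL toL_injective
  rw [linearIndependent_iff'] at dedekind ⊢
  intro s c hc χ hχ
  have key : ∑ χ ∈ s, (c χ • x χ) • (toL χ : Gal(L/K) → L) = 0 := by
    ext g
    simpa [toL, hx, Algebra.smul_def, mul_assoc, mul_comm, mul_left_comm] using congr_arg g hc
  simpa [hx0] using dedekind s _ key χ hχ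

theorem mul_mem_span_eigenvector [IsGalois K L] {χ ψ : Gal(L/K) →* Kˣ} {x y z : L} (hz0 : z ≠ 0)
    (hx : ∀ g : Gal(L/K), g x = (χ g : K) • x) (hy : ∀ g : Gal(L/K), g y = (ψ g : K) • y)
    (hz : ∀ g : Gal(L/K), g z = ((χ * ψ) g : K) • z) : x * y ∈ Submodule.span K {z} := by
  have fixed (g : Gal(L/K)) : g (x * y / z) = x * y / z := by
    rw [map_div₀, map_mul, hx, hy, hz, smul_mul_smul_comm, MonoidHom.mul_apply, Units.val_mul,
      Algebra.smul_def, Algebra.smul_def, mul_div_mul_left]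
    simp
  obtain ⟨c, hc⟩ := (IsGalois.mem_range_algebraMap_iff_fixed (F := K) _).2 fixed
  rw [eq_div_iff hz0] at hc
  exact Submodule.mem_span_singleton.2 ⟨c, by rw [Algebra.smul_def, hc]⟩

theorem kappa_le_card_mul_of_injective [IsGalois K L] {G : Type*} [Group G]
    {χ : G →* Gal(L/K) →* Kˣ} (hχ : Function.Injective χ) {A : Finset G} (hA : A.Nonempty)
    (B : Finset G) : kappa (finrank K L) A.card B.card ≤ (A * B).card := by
  choose x hx0 hx using exists_eigenvector (K := K) (L := L)
  have hli := (linearIndependent_eigenvectors hx0 hx).comp χ hχ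
  let E (S : Finset G) : Submodule K L := Submodule.span K (Set.range fun g : S ↦ x (χ g))
  have finrank_E (S) : finrank K (E S) = S.card :=
    (finrank_span_eq_card (hli.comp _ Subtype.val_injective)).trans (Fintype.card_coe S)
  have E_mul_le : E A * E B ≤ E (A * B) := by
    rw [Submodule.span_mul_span, Submodule.span_le]
    rintro _ ⟨_, ⟨⟨a, ha⟩, rfl⟩, _, ⟨⟨b, hb⟩, rfl⟩, rfl⟩
    have hab (g) : g (x (χ (a * b))) = ((χ a * χ b) g : K) • x (χ (a * b)) := by
      rw [← map_mul, hx]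
    refine Submodule.span_mono ?_ (mul_mem_span_eigenvector (hx0 _) (hx _) (hx _) hab)
    exact Set.singleton_subset_iff.2 ⟨⟨_, Finset.mul_mem_mul ha hb⟩, rfl⟩
  have hEA : E A ≠ ⊥ := by
    rw [← Submodule.one_le_finrank_iff, finrank_E]
    exact hA.card_pos
  calc kappa (finrank K L) A.card B.card ≤ finrank K ↥(E A * E B) := by
        simpa only [finrank_E] using kappa_le_finrank_mul hEA (E B)
    _ ≤ finrank K (E (A * B)) := Submodule.finrank_mono E_mul_le
    _ = (A * B).card := finrank_E _

end Eigenvectors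

theorem exists_intermediateField_gal_mulEquiv (k G : Type*) [Field k] [Group G] [Finite G] :
    ∃ K : IntermediateField k (FractionRing (MvPolynomial G k)),
      FiniteDimensional K (FractionRing (MvPolynomial G k)) ∧
      IsGalois K (FractionRing (MvPolynomial G k)) ∧
      Nonempty (G ≃* Gal(FractionRing (MvPolynomial G k)/K)) := by
  let M := FractionRing (MvPolynomial G k)
  let permute : Equiv.Perm G →* (MvPolynomial G k ≃ₐ[k] MvPolynomial G k) :=
    { toFun := MvPolynomial.renameEquiv k
      map_one' := MvPolynomial.renameEquiv_refl k
      map_mul' σ τ := (MvPolynomial.renameEquiv_trans k τ σ).symm }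
  have permute_injective : Function.Injective permute := fun σ τ h ↦ by
    ext g
    simpa [permute] using AlgEquiv.congr_fun h (MvPolynomial.X g)
  let φ : G →* Gal(M/k) :=
    (IsFractionRing.fieldEquivOfAlgEquivHom k M).comp (permute.comp (MulAction.toPermHom G G))
  have hφ : Function.Injective φ :=
    (IsFractionRing.fieldEquivOfAlgEquivHom_injective k _ k M).comp
      (permute_injective.comp MulAction.toPerm_injective)
  have := Finite.of_surjective _ φ.rangeRestrict_surjective
  exact ⟨.fixedField φ.range,
    inferInstanceAs (FiniteDimensional (FixedPoints.subfield φ.range M) M),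
    .of_fixed_field M φ.range,
    ⟨(MonoidHom.ofInjective hφ).trans (FixedPoints.toAlgAutMulEquiv φ.range M)⟩⟩

theorem kappa_le_card_mul {G : Type*} [CommGroup G] [Finite G] {A : Finset G} (hA : A.Nonempty)
    (B : Finset G) : kappa (Nat.card G) A.card B.card ≤ (A * B).card := by
  obtain ⟨K, _, _, ⟨e⟩⟩ := exists_intermediateField_gal_mulEquiv ℂ G
  have : NeZero (Monoid.exponent G : ℂ) := ⟨mod_cast Monoid.exponent_ne_zero_of_finite⟩
  obtain ⟨ζ, hζ⟩ := HasEnoughRootsOfUnity.exists_primitiveRoot ℂ (Monoid.exponent G)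
  have : HasEnoughRootsOfUnity K (Monoid.exponent G) :=
    { prim := ⟨_, hζ.map_of_injective (algebraMap ℂ K).injective⟩
      cyc := inferInstance }
  obtain ⟨f⟩ := CommGroup.monoidHom_mulEquiv_of_hasEnoughRootsOfUnity G K
  rw [Nat.card_congr e.toEquiv, IsGalois.card_aut_eq_finrank]
  let χ := f.symm.trans e.monoidHomCongrLeft
  exact kappa_le_card_mul_of_injective (χ := χ.toMonoidHom) χ.injective hA B

end Characters

section GroupConstruction

variable (G : Type*) [CommGroup G] [Finite G]

theorem exists_subgroup_card_eq {d : ℕ} (hd : d ∣ Nat.card G) :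
    ∃ H : Subgroup G, Nat.card H = d := by
  induction hn : Nat.card G using Nat.strong_induction_on generalizing G d with | _ n ih
  subst hn
  obtain rfl | hd1 := eq_or_ne d 1
  · exact ⟨⊥, Subgroup.card_bot⟩
  obtain ⟨p, hp, e, rfl⟩ := Nat.exists_prime_and_dvd hd1
  have := Fact.mk hp
  obtain ⟨x, hx⟩ := exists_prime_orderOf_dvd_card' p (dvd_of_mul_right_dvd hd)
  let C := Subgroup.zpowers x
  have hC : Nat.card C = p := by rw [Nat.card_zpowers, hx]
  have hcard : Nat.card G = p * Nat.card (G ⧸ C) := by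
    rw [← hC, mul_comm, Subgroup.card_eq_card_quotient_mul_card_subgroup C]
  obtain ⟨H, hH⟩ := ih (Nat.card (G ⧸ C)) (hcard ▸ lt_mul_left Nat.card_pos hp.one_lt) (G ⧸ C)
    (Nat.dvd_of_mul_dvd_mul_left hp.pos (hcard ▸ hd)) rfl
  refine ⟨H.comap (QuotientGroup.mk' C), ?_⟩
  rw [← hH, ← hC]
  exact QuotientGroup.card_preimage_mk C H

theorem val_finEquiv_symm {n : ℕ} [NeZero n] (a : ZMod n) :
    ((ZMod.finEquiv n).symm a : ℕ) = a.val := by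
  cases n with
  | zero => exact (NeZero.ne 0 rfl).elim
  | succ n => rfl

theorem exists_subadditive_equiv_fin :
    ∃ φ : G ≃ Fin (Nat.card G), ∀ x y, (φ (x * y) : ℕ) ≤ φ x + φ y := by
  obtain ⟨ι, _, n, hn, ⟨e⟩⟩ := CommGroup.equiv_prod_multiplicative_zmod_of_finite G
  have (i : ι) : NeZero (n i) := .of_gt (hn i)
  let σ : Fin (Fintype.card ι) ≃ ι := (Fintype.equivFin ι).symm
  let digits : G ≃ ∀ i, Fin (n (σ i)) := e.toEquiv.trans <|
    (Equiv.piCongrLeft' _ σ.symm).trans <|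
      Equiv.piCongrRight fun i ↦ Multiplicative.toAdd.trans (ZMod.finEquiv (n (σ i))).symm.toEquiv
  have val_digits (x i) : (digits x i : ℕ) = (e x (σ i)).toAdd.val :=
    val_finEquiv_symm (e x (σ i)).toAdd
  have digits_mul (x y i) : (digits (x * y) i : ℕ) ≤ digits x i + digits y i := by
    simpa only [val_digits, map_mul, Pi.mul_apply, toAdd_mul] using ZMod.val_add_le _ _
  let φ := digits.trans finPiFinEquiv
  refine ⟨φ.trans (finCongr (Nat.card_eq_of_equiv_fin φ).symm), fun x y ↦ ?_⟩
  simp only [φ, Equiv.trans_apply, finCongr_apply, Fin.val_cast, finPiFinEquiv_apply,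
    ← Finset.sum_add_distrib, ← add_mul]
  gcongr
  exact digits_mul x y _

variable {G}

theorem exists_card_mul_le_kappa {r s : ℕ} (hr : r ≤ Nat.card G) (hs : s ≤ Nat.card G) :
    ∃ A B : Finset G, A.card = r ∧ B.card = s ∧ (A * B).card ≤ kappa (Nat.card G) r s := by
  have := Fintype.ofFinite G
  obtain ⟨d, hd, hκ⟩ := exists_kappa_eq (Nat.card G) r s
  obtain ⟨H, rfl⟩ := exists_subgroup_card_eq G hd
  obtain ⟨φ, hφ⟩ := exists_subadditive_equiv_fin (G ⧸ H)
  let P (k : ℕ) : Finset G := {x | φ x < k}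
  have card_P (k : ℕ) : (P k).card = Nat.card H * min (Nat.card (G ⧸ H)) k := by
    have card_lt : Nat.card {q | φ q < k} = min (Nat.card (G ⧸ H)) k :=
      calc Nat.card {q | φ q < k} = Nat.card {i : Fin (Nat.card (G ⧸ H)) | i < k} :=
            Nat.card_congr (φ.subtypeEquiv fun _ ↦ Iff.rfl)
        _ = min (Nat.card (G ⧸ H)) k := by
            rw [Nat.card_eq_fintype_card, Fintype.card_subtype]
            exact Fin.card_filter_val_lt
    rw [← card_lt, ← QuotientGroup.card_preimage_mk, ← Nat.card_eq_finsetCard]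
    exact Nat.card_congr (Equiv.subtypeEquivRight fun x ↦ by simp [P])
  have P_mul_P (a b : ℕ) : P a * P b ⊆ P (a + b - 1) := by
    refine Finset.mul_subset_iff.2 fun x hx y hy ↦ ?_
    simp only [P, Finset.mem_filter_univ] at hx hy ⊢
    have : _ ≤ _ := hφ x y
    rw [QuotientGroup.mk_mul]
    lia
  have exists_subset {t : ℕ} (ht : t ≤ Nat.card G) :
      ∃ A ⊆ P (t ⌈/⌉ Nat.card H), A.card = t := by
    refine Finset.exists_subset_card_eq ?_
    rw [card_P, ← Nat.mul_min_mul_left, mul_comm, ← H.card_eq_card_quotient_mul_card_subgroup]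
    exact le_min ht (le_smul_ceilDiv Nat.card_pos)
  obtain ⟨A, hAP, hA⟩ := exists_subset hr
  obtain ⟨B, hBP, hB⟩ := exists_subset hs
  refine ⟨A, B, hA, hB, ?_⟩
  calc (A * B).card ≤ (P (r ⌈/⌉ Nat.card H + s ⌈/⌉ Nat.card H - 1)).card :=
        Finset.card_le_card ((Finset.mul_subset_mul hAP hBP).trans (P_mul_P _ _))
    _ ≤ kappa (Nat.card G) r s := by rw [card_P, hκ]; gcongr; exact min_le_right _ _

theorem sInf_card_mul_eq_kappa {r s : ℕ} (hr0 : 0 < r) (hr : r ≤ Nat.card G) (hs : s ≤ Nat.card G) :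
    sInf {m : ℕ | ∃ A B : Finset G, A.card = r ∧ B.card = s ∧ (A * B).card = m} =
      kappa (Nat.card G) r s := by
  obtain ⟨A, B, hA, hB, hAB⟩ := exists_card_mul_le_kappa hr hs
  refine le_antisymm (le_trans (Nat.sInf_le ⟨A, B, hA, hB, rfl⟩) hAB)
    (le_csInf ⟨_, A, B, hA, hB, rfl⟩ ?_)
  rintro _ ⟨A, B, rfl, rfl, rfl⟩
  exact kappa_le_card_mul (Finset.card_pos.1 hr0) B

end GroupConstruction

section FieldConstruction

open Module

theorem exists_submodule_le_finrank_eq {K V : Type*} [Field K] [AddCommGroup V] [Module K V]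
    {P : Submodule K V} {t : ℕ} (ht : t ≤ finrank K P) : ∃ A ≤ P, finrank K A = t := by
  obtain ⟨v, hv⟩ := exists_linearIndependent_of_le_finrank ht
  refine ⟨(Submodule.span K (Set.range v)).map P.subtype, Submodule.map_subtype_le _ _, ?_⟩
  rw [P.finrank_map_subtype_eq, finrank_span_eq_card hv, Fintype.card_fin]

variable {K L : Type*} [Field K] [Field L] [Algebra K L] [FiniteDimensional K L] [IsGalois K L]
  [IsMulCommutative Gal(L/K)]

open scoped IsMulCommutative in
theorem exists_intermediateField_finrank_eq {d : ℕ} (hd : d ∣ finrank K L) :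
    ∃ F : IntermediateField K L, finrank K F = d := by
  obtain ⟨c, hc⟩ := hd
  obtain ⟨H, hH⟩ := exists_subgroup_card_eq Gal(L/K) (d := c)
    (by rw [IsGalois.card_aut_eq_finrank, hc]; exact dvd_mul_left c d)
  refine ⟨.fixedField H, Nat.eq_of_mul_eq_mul_right (hH ▸ Nat.card_pos : 0 < c) ?_⟩
  rw [← hc, ← finrank_mul_finrank K (IntermediateField.fixedField H) L,
    IntermediateField.finrank_fixedField_eq_card, hH]

theorem exists_finrank_mul_le_kappa {r s : ℕ} (hr : r ≤ finrank K L) (hs : s ≤ finrank K L) :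
    ∃ A B : Submodule K L, finrank K A = r ∧ finrank K B = s ∧
      finrank K ↥(A * B) ≤ kappa (finrank K L) r s := by
  obtain ⟨d, hd, hκ⟩ := exists_kappa_eq (finrank K L) r s
  obtain ⟨F, rfl⟩ := exists_intermediateField_finrank_eq hd
  obtain ⟨θ, hθ⟩ := Field.exists_primitive_element F L
  have hdeg := (Field.primitive_element_iff_minpoly_natDegree_eq F θ).1 hθ
  let P (k : ℕ) : Submodule F L := Submodule.span F (Set.range fun i : Fin k ↦ θ ^ (i : ℕ))
  have finrank_P_le (k : ℕ) : finrank K (P k) ≤ finrank K F * k := by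
    rw [← finrank_mul_finrank K F]
    exact Nat.mul_le_mul_left _ ((finrank_range_le_card _).trans_eq (Fintype.card_fin k))
  have finrank_P {k : ℕ} (hk : k ≤ finrank F L) : finrank K (P k) = finrank K F * k := by
    have hli : LinearIndependent F fun i : Fin k ↦ θ ^ (i : ℕ) :=
      (linearIndependent_pow (K := F) θ).comp (Fin.castLE (hk.trans_eq hdeg.symm))
        (Fin.castLE_injective _)
    rw [← finrank_mul_finrank K F, finrank_span_eq_card hli, Fintype.card_fin]
  have P_mul_P (a b : ℕ) : P a * P b ≤ P (a + b - 1) := by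
    rw [Submodule.span_mul_span, Submodule.span_le]
    rintro _ ⟨_, ⟨i, rfl⟩, _, ⟨j, rfl⟩, rfl⟩
    exact Submodule.subset_span ⟨⟨i + j, by lia⟩, pow_add θ i j⟩
  have exists_submodule {t : ℕ} (ht : t ≤ finrank K L) :
      ∃ A ≤ (P (t ⌈/⌉ finrank K F)).restrictScalars K, finrank K A = t := by
    refine exists_submodule_le_finrank_eq (le_of_le_of_eq (le_smul_ceilDiv finrank_pos)
      (finrank_P ?_).symm)
    rwa [ceilDiv_le_iff_le_mul finrank_pos, finrank_mul_finrank]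
  obtain ⟨A, hAP, hA⟩ := exists_submodule hr
  obtain ⟨B, hBP, hB⟩ := exists_submodule hs
  refine ⟨A, B, hA, hB, ?_⟩
  have hAB : A * B ≤ (P (r ⌈/⌉ finrank K F + s ⌈/⌉ finrank K F - 1)).restrictScalars K :=
    Submodule.mul_le.2 fun x hx y hy ↦ P_mul_P _ _ (Submodule.mul_mem_mul (hAP hx) (hBP hy))
  exact (Submodule.finrank_mono hAB).trans ((finrank_P_le _).trans_eq hκ.symm)

theorem sInf_finrank_mul_eq_kappa {r s : ℕ} (hr0 : 0 < r) (hr : r ≤ finrank K L)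
    (hs : s ≤ finrank K L) :
    sInf {m : ℕ | ∃ A B : Submodule K L,
      finrank K A = r ∧ finrank K B = s ∧ finrank K ↥(A * B) = m} = kappa (finrank K L) r s := by
  obtain ⟨A, B, hA, hB, hAB⟩ := exists_finrank_mul_le_kappa hr hs
  refine le_antisymm (le_trans (Nat.sInf_le ⟨A, B, hA, hB, rfl⟩) hAB)
    (le_csInf ⟨_, A, B, hA, hB, rfl⟩ ?_)
  rintro _ ⟨A, B, rfl, rfl, rfl⟩
  exact kappa_le_finrank_mul (Submodule.one_le_finrank_iff.1 hr0) B

end FieldConstruction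

/-- Corollary 6.2: for a finite Galois extension `K ⊆ L` with abelian Galois group `G`
of order `n` and positive `r, s ≤ n`, the minimum of `dim_K ⟨AB⟩` over `K`-subspaces
`A, B` of `L` with `dim_K A = r`, `dim_K B = s` equals the minimum of `|A'B'|` over
subsets `A', B' ⊆ G` with `|A'| = r`, `|B'| = s`. -/
theorem stmt_13 (K L : Type*) [Field K] [Field L] [Algebra K L]
    [FiniteDimensional K L] [IsGalois K L]
    (hab : ∀ σ τ : L ≃ₐ[K] L, σ * τ = τ * σ)
    (n : ℕ) (hn : Module.finrank K L = n)
    (r s : ℕ) (hr : 0 < r) (hs : 0 < s) (hrn : r ≤ n) (hsn : s ≤ n) :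
    sInf {m : ℕ | ∃ A B : Submodule K L,
        Module.finrank K A = r ∧ Module.finrank K B = s ∧ Module.finrank K ↥(A * B) = m}
      = sInf {m : ℕ | ∃ A' B' : Finset (L ≃ₐ[K] L),
          A'.card = r ∧ B'.card = s ∧ (A' * B').card = m} := by
  have : IsMulCommutative Gal(L/K) := ⟨⟨hab⟩⟩
  subst hn
  rw [sInf_finrank_mul_eq_kappa hr hrn hsn]
  rw [← IsGalois.card_aut_eq_finrank K L] at hrn hsn ⊢
  open scoped IsMulCommutative in
  exact (sInf_card_mul_eq_kappa hr hrn hsn).symm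
end

section
/- Let K ⊆ L be a commutative field extension and let V be a nonzero finite-dimensional K-subspace of L. Then the stabilizer H = {x ∈ L : xV ⊆ V} is a subfield of L containing K, and it satisfies ⟨HV⟩ = V, where ⟨HV⟩ is the K-span of {hv : h ∈ H, v ∈ V}. -/
open scoped Pointwise

/-!
If `x ≠ 0` and `xV ⊆ V`, then multiplication by `x` is an injective `K`-linear endomorphism of `V`.
As `V` is Artinian over `K`, it is also surjective, so `xV = V` and hence `x⁻¹V = V`.
-/

section Semiring

variable {R A : Type*} [CommSemiring R] [Semiring A] [Algebra R A]

/-- The stabilizer of a submodule `V` of an algebra under left multiplication, as a subalgebra. When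
the algebra is commutative this is the colon submodule `V / V`, which Mathlib does not define for
noncommutative algebras. -/
def leftStabilizer (V : Submodule R A) : Subalgebra R A where
  carrier := {x | ∀ v ∈ V, x * v ∈ V}
  mul_mem' hx hy v hv := by
    rw [mul_assoc]
    exact hx _ (hy v hv)
  add_mem' hx hy v hv := by
    rw [add_mul]
    exact V.add_mem (hx v hv) (hy v hv)
  algebraMap_mem' r v hv := by
    rw [← Algebra.smul_def]
    exact V.smul_mem r hv

theorem coe_leftStabilizer (V : Submodule R A) :
    (leftStabilizer V : Set A) = {x | ∀ v ∈ V, x * v ∈ V} :=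
  rfl

theorem leftStabilizer_mul_self (V : Submodule R A) :
    Subalgebra.toSubmodule (leftStabilizer V) * V = V := by
  apply le_antisymm
  · exact Submodule.mul_le.mpr fun _ hx v hv ↦ hx v hv
  · intro v hv
    have one_mem_stab : (1 : A) ∈ Subalgebra.toSubmodule (leftStabilizer V) :=
      one_mem (leftStabilizer V)
    simpa only [one_mul] using Submodule.mul_mem_mul one_mem_stab hv

variable {V : Submodule R A}

theorem map_mulLeft_eq_of_isLeftRegular [IsArtinian R V] {x : A} (hreg : IsLeftRegular x)
    (hx : x ∈ leftStabilizer V) : V.map (LinearMap.mulLeft R x) = V := by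
  apply le_antisymm
  · exact Submodule.map_le_iff_le_comap.mpr hx
  · intro v hv
    have hinj : Function.Injective ((LinearMap.mulLeft R x).restrict hx) :=
      fun _ _ h ↦ Subtype.ext (hreg (congrArg Subtype.val h))
    obtain ⟨w, hw⟩ := IsArtinian.surjective_of_injective_endomorphism _ hinj ⟨v, hv⟩
    exact ⟨w, w.2, congrArg Subtype.val hw⟩

theorem units_inv_mem_leftStabilizer [IsArtinian R V] {u : Aˣ} (hu : ↑u ∈ leftStabilizer V) :
    ↑u⁻¹ ∈ leftStabilizer V := by
  intro v hv
  rw [← map_mulLeft_eq_of_isLeftRegular u.isUnit.isRegular.left hu] at hv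
  obtain ⟨w, hw, rfl⟩ := hv
  rwa [LinearMap.mulLeft_apply, Units.inv_mul_cancel_left]

theorem inv_mem_leftStabilizer {D : Type*} [DivisionSemiring D] [Algebra R D] {V : Submodule R D}
    [IsArtinian R V] {x : D} (hx : x ∈ leftStabilizer V) : x⁻¹ ∈ leftStabilizer V := by
  obtain rfl | hx0 := eq_or_ne x 0
  · rwa [inv_zero]
  · exact units_inv_mem_leftStabilizer (u := Units.mk0 x hx0) hx

end Semiring

section DivisionRing

variable {K L : Type*} [CommRing K] [DivisionRing L] [Algebra K L]

/-- The left stabilizer of an Artinian submodule of a division algebra, as a division subring.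
Mathlib's `Subfield` does not require commutativity. -/
def leftStabilizerSubfield (V : Submodule K L) [IsArtinian K V] : Subfield L where
  toSubring := (leftStabilizer V).toSubring
  inv_mem' _ := inv_mem_leftStabilizer

end DivisionRing

theorem stmt_15_general (K L : Type*) [CommRing K] [DivisionRing L] [Algebra K L]
    (V : Submodule K L) [IsArtinian K V] :
    (∃ F : Subfield L, (F : Set L) = {x : L | ∀ v ∈ V, x * v ∈ V} ∧
        Set.range (algebraMap K L) ⊆ (F : Set L)) ∧
      Submodule.span K ({x : L | ∀ v ∈ V, x * v ∈ V} * (V : Set L)) = V := by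
  constructor
  · exact ⟨leftStabilizerSubfield V, coe_leftStabilizer V, (leftStabilizer V).range_subset⟩
  · rw [← coe_leftStabilizer, ← Subalgebra.coe_toSubmodule, ← Submodule.mul_eq_span_mul_set,
      leftStabilizer_mul_self]

/-- For a nonzero finite-dimensional `K`-subspace `V` of `L`, the stabilizer
`H = {x ∈ L : x·V ⊆ V}` is a subfield of `L` containing `K`, and the `K`-span of the
product set `HV` equals `V`. -/
theorem stmt_15 (K L : Type*) [Field K] [Field L] [Algebra K L]
    (V : Submodule K L) (hV : V ≠ ⊥) (hVfin : FiniteDimensional K V) :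
    (∃ F : Subfield L, (F : Set L) = {x : L | ∀ v ∈ V, x * v ∈ V} ∧
        Set.range (algebraMap K L) ⊆ (F : Set L)) ∧
      Submodule.span K ({x : L | ∀ v ∈ V, x * v ∈ V} * (V : Set L)) = V :=
  stmt_15_general K L V
end
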